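/- Let M be a semi-finite von Neumann algebra (i.e., a von Neumann algebra admitting a faithful normal semifinite trace) and let Δ : M → M be a 2-local derivation. Then Δ is additive: Δ(u + v) = Δ(u) + Δ(v) for all u, v ∈ M. -/

import Mathlib

open scoped ENNReal NNReal

variable {H : Type*} [NormedAddCommGroup H] [InnerProductSpace ℂ H] [CompleteSpace H]

/-- Scalar multiplication is inherited by a von Neumann algebra from `B(H)`. -/
instance : SMulMemClass (VonNeumannAlgebra H) ℂ (H →L[ℂ] H) where
  smul_mem {M} c _x hx := M.toStarSubalgebra.smul_mem hx c

/-- A map `D : M → M` is a derivation: it is `ℂ`-linear and satisfies the Leibniz rule. -/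
def IsDerivation (M : VonNeumannAlgebra H) (D : M → M) : Prop :=
  (∀ x y : M, D (x + y) = D x + D y) ∧
  (∀ (c : ℂ) (x : M), D (c • x) = c • D x) ∧
  (∀ x y : M, D (x * y) = D x * y + x * D y)

/-- A map `Δ : M → M` (not assumed linear) is a 2-local derivation if for every pair `x, y`
there is a derivation agreeing with `Δ` at `x` and at `y`. -/
def Is2LocalDerivation (M : VonNeumannAlgebra H) (Δ : M → M) : Prop :=
  ∀ x y : M, ∃ D : M → M, IsDerivation M D ∧ Δ x = D x ∧ Δ y = D y

/-- An element of a von Neumann algebra is positive if it is a positive operator on `H`. -/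
def IsPos (M : VonNeumannAlgebra H) (x : M) : Prop :=
  ContinuousLinearMap.IsPositive (x : H →L[ℂ] H)

/-- The operator (Loewner) order on a von Neumann algebra: `x ≤ y` iff `y - x` is positive. -/
def OpLE (M : VonNeumannAlgebra H) (x y : M) : Prop :=
  ContinuousLinearMap.IsPositive ((y : H →L[ℂ] H) - (x : H →L[ℂ] H))

/-- A faithful normal semifinite trace on a von Neumann algebra `M`: a map on `M` which, on the
positive cone, is additive and positively homogeneous, satisfies `τ(xx⋆) = τ(x⋆x)`, is faithful,
normal (commutes with suprema of bounded monotone increasing nets of positive elements) and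
semifinite. -/
structure FNSTrace (M : VonNeumannAlgebra H) : Type _ where
  τ : M → ℝ≥0∞
  additive : ∀ x y : M, IsPos M x → IsPos M y → τ (x + y) = τ x + τ y
  pos_smul : ∀ (c : ℝ≥0) (x : M), IsPos M x → τ ((c : ℂ) • x) = c * τ x
  tracial : ∀ x : M, τ (x * star x) = τ (star x * x)
  faithful : ∀ x : M, IsPos M x → τ x = 0 → x = 0
  normal : ∀ {ι : Type} [Nonempty ι] [Preorder ι] [IsDirected ι (· ≤ ·)]
      (f : ι → M) (s : M), (∀ i, IsPos M (f i)) →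
      (∀ i j, i ≤ j → OpLE M (f i) (f j)) →
      (∀ i, OpLE M (f i) s) → (∀ u : M, (∀ i, OpLE M (f i) u) → OpLE M s u) →
      τ s = ⨆ i, τ (f i)
  semifinite : ∀ x : M, IsPos M x → x ≠ 0 →
      ∃ y : M, IsPos M y ∧ y ≠ 0 ∧ OpLE M y x ∧ τ y < ⊤

/-- `a` belongs to the definition ideal `m_τ = {a ∈ M : τ(|a|) < ∞}`, where `|a|` is the unique
positive square root of `a⋆a`. -/
def MemIdeal (M : VonNeumannAlgebra H) (τ : M → ℝ≥0∞) (a : M) : Prop :=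
  ∃ b : M, IsPos M b ∧ b * b = star a * a ∧ τ b < ⊤

open Filter Topology

lemma vn_mem_of_commute (M : VonNeumannAlgebra H) {x : H →L[ℂ] H}
    (h : ∀ y : H →L[ℂ] H, (∀ m ∈ M, Commute m y) → Commute x y) : x ∈ M := by
  rw [← SetLike.mem_coe, ← M.centralizer_centralizer, Set.mem_centralizer_iff]
  intro y hy
  exact (h y (fun m hm => hy m hm)).eq.symm

lemma vn_isClosed (M : VonNeumannAlgebra H) : IsClosed (M : Set (H →L[ℂ] H)) := by
  rw [← M.centralizer_centralizer]
  exact Set.isClosed_centralizer _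

lemma vn_sqrt_mem (M : VonNeumannAlgebra H) {x : H →L[ℂ] H} (hx : x ∈ M) : CFC.sqrt x ∈ M :=
  vn_mem_of_commute M fun y hy => by
    exact (hy x hx).cfcₙ_nnreal _

/-- Spectral splitting: the support projection of the positive part. -/
lemma vn_spectral (M : VonNeumannAlgebra H) {x : H →L[ℂ] H} (hx : x ∈ M) (hsa : IsSelfAdjoint x) :
    ∃ q y z : H →L[ℂ] H, q ∈ M ∧ IsStarProjection q ∧ 0 ≤ y ∧ 0 ≤ z ∧ x = y - z ∧
      y * q = y ∧ z * q = 0 ∧ (∀ e, y * e = 0 → q * e = 0) ∧ (∀ e, x * e = 0 → q * e = 0) := by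
  set y := x⁺ with hy
  set z := x⁻ with hz
  have hy0 : 0 ≤ y := CFC.posPart_nonneg x
  have hz0 : 0 ≤ z := CFC.negPart_nonneg x
  have hxyz : x = y - z := (CFC.posPart_sub_negPart x).symm
  have hyz : y * z = 0 := CFC.posPart_mul_negPart x
  have hysa : star y = y := (IsSelfAdjoint.of_nonneg hy0).star_eq
  have hzsa : star z = z := (IsSelfAdjoint.of_nonneg hz0).star_eq
  have hyy : ∀ a b : H, inner ℂ (y a) b = inner ℂ a (y b) := fun a b => by
    rw [← ContinuousLinearMap.adjoint_inner_right, ← ContinuousLinearMap.star_eq_adjoint, hysa]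
  have hK : IsClosed ((LinearMap.ker y.toLinearMap : Submodule ℂ H) : Set H) := y.isClosed_ker
  have : CompleteSpace (LinearMap.ker y.toLinearMap) := hK.completeSpace_coe
  set U := (LinearMap.ker y.toLinearMap)ᗮ with hU
  set q := U.starProjection with hq
  have hqp : IsStarProjection q := isStarProjection_starProjection
  have hker : ∀ v, y v = 0 → q v = 0 := by
    intro v hv
    have : v ∈ q.ker := by
      rw [hq, Submodule.ker_starProjection, hU, Submodule.orthogonal_orthogonal]
      exact hv
    exact this
  have hker' : ∀ v, q v = 0 → y v = 0 := by
    intro v hv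
    have : v ∈ q.ker := hv
    rw [hq, Submodule.ker_starProjection, hU, Submodule.orthogonal_orthogonal] at this
    exact this
  have hqq : q * q = q := hqp.isIdempotentElem
  have hyq : y * q = y := by
    have : y * (1 - q) = 0 := by
      ext v
      apply hker'
      have : q * (1 - q) = 0 := by rw [mul_sub, mul_one, hqq, sub_self]
      exact congr($this v)
    rw [mul_sub, mul_one, sub_eq_zero] at this
    exact this.symm
  have hqe : ∀ e, y * e = 0 → q * e = 0 := by
    intro e he
    ext v
    exact hker _ congr($he v)
  refine ⟨q, y, z, ?_, hqp, hy0, hz0, hxyz, hyq, ?_, hqe, ?_⟩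
  · rw [VonNeumannAlgebra.IsStarProjection.mem_iff hqp]
    intro w hw
    rw [VonNeumannAlgebra.mem_commutant_iff] at hw
    have hw' : star w ∈ M.commutant := star_mem (VonNeumannAlgebra.mem_commutant_iff.2 hw)
    rw [VonNeumannAlgebra.mem_commutant_iff] at hw'
    have hc : y * star w = star w * y := by
      have : Commute y (star w) := Commute.cfcₙ_real (hw' x hx) _
      exact this
    rw [hq, Submodule.range_starProjection, Module.End.mem_invtSubmodule]
    intro v hv
    rw [Submodule.mem_comap, hU, Submodule.mem_orthogonal]
    intro a ha
    have h1 : (star w) a ∈ LinearMap.ker y.toLinearMap := by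
      have h2 : y ((star w) a) = (star w) (y a) := congr($hc a)
      have h3 : y a = 0 := ha
      show y ((star w) a) = 0
      rw [h2, h3, map_zero]
    have h4 := (Submodule.mem_orthogonal _ _).1 hv _ h1
    rw [ContinuousLinearMap.star_eq_adjoint, ContinuousLinearMap.adjoint_inner_left] at h4
    exact h4
  · have h1 : q * z = 0 := hqe z hyz
    have := congr(star $h1)
    rwa [star_mul, hqp.isSelfAdjoint.star_eq, hzsa, star_zero] at this
  · intro e he
    apply hqe
    have h1 : y * y * e = 0 := by
      have : y * x = y * y := by rw [hxyz, mul_sub, hyz, sub_zero]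
      rw [← this, mul_assoc, he, mul_zero]
    have h2 : star (y * e) * (y * e) = 0 := by
      rw [star_mul, hysa, mul_assoc, ← mul_assoc y, h1, mul_zero]
    exact CStarRing.star_mul_self_eq_zero_iff _ |>.1 h2

namespace IsDerivation

variable {M : VonNeumannAlgebra H} {D : M → M}

lemma d_one (hD : IsDerivation M D) : D 1 = 0 := by
  have := hD.2.2 1 1
  simpa using this

lemma d_smul (hD : IsDerivation M D) (c : ℂ) : IsDerivation M (fun x => c • D x) := by
  refine ⟨fun x y => ?_, fun r x => ?_, fun x y => ?_⟩
  · ext1; simp [hD.1]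
  · ext1; simp [hD.2.1, smul_comm c r]
  · ext1; simp [hD.2.2]

lemma d_neg (hD : IsDerivation M D) (x : M) : D (-x) = -D x := by
  have := hD.2.1 (-1) x
  have h1 : (-1 : ℂ) • x = -x := by ext1; simp
  have h2 : (-1 : ℂ) • D x = -D x := by ext1; simp
  rwa [h1, h2] at this

lemma d_sub (hD : IsDerivation M D) (x y : M) : D (x - y) = D x - D y := by
  rw [sub_eq_add_neg, hD.1, d_neg hD, sub_eq_add_neg]

/-- At approximate norming vectors, the quadratic form of `D x` is small. -/
lemma d_numeric (hD : IsDerivation M D) (x : M) (hx : IsSelfAdjoint (x : H →L[ℂ] H)) :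
    ∃ K : ℝ, ∀ ε : ℝ, ∀ ξ : H, ‖ξ‖ = 1 →
      ‖(x : H →L[ℂ] H)‖ - ε ≤ RCLike.re (inner ℂ ((x : H →L[ℂ] H) ξ) ξ) →
      |RCLike.re (inner ℂ ((D x : H →L[ℂ] H) ξ) ξ)| ≤ K * √ε := by
  set N := ‖(x : H →L[ℂ] H)‖ with hN
  have h1 : 0 ≤ algebraMap ℝ (H →L[ℂ] H) N - x := sub_nonneg.2 hx.le_algebraMap_norm_self
  have hal : algebraMap ℝ (H →L[ℂ] H) N = (((N : ℂ) • (1 : M) : M) : H →L[ℂ] H) := by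
    ext v; simp [Algebra.algebraMap_eq_smul_one]
  have hmem : algebraMap ℝ (H →L[ℂ] H) N - x ∈ M := by
    rw [hal]; exact sub_mem (Subtype.mem _) x.2
  set h := CFC.sqrt (algebraMap ℝ (H →L[ℂ] H) N - x) with hh
  have hhm : h ∈ M := vn_sqrt_mem M hmem
  have hh0 : 0 ≤ h := CFC.sqrt_nonneg _
  have hhh : h * h = algebraMap ℝ (H →L[ℂ] H) N - x := CFC.sqrt_mul_sqrt_self _ h1
  have hsa : star h = h := (IsSelfAdjoint.of_nonneg hh0).star_eq
  have hinn : ∀ a b : H, inner ℂ (h a) b = inner ℂ a (h b) := fun a b => by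
    rw [← ContinuousLinearMap.adjoint_inner_right, ← ContinuousLinearMap.star_eq_adjoint, hsa]
  set k : M := D ⟨h, hhm⟩ with hk
  have hDx : (D x : H →L[ℂ] H) = -(k * h + h * k) := by
    have e : x = (N : ℂ) • (1 : M) - (⟨h, hhm⟩ : M) * ⟨h, hhm⟩ := by
      ext1
      show (x : H →L[ℂ] H) = (((N : ℂ) • (1 : M) : M) : H →L[ℂ] H) - h * h
      rw [hhh, hal]; abel
    have := d_sub hD ((N : ℂ) • (1 : M)) ((⟨h, hhm⟩ : M) * ⟨h, hhm⟩)
    rw [← e, hD.2.1, d_one hD, hD.2.2] at this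
    rw [this]
    simp [hk]
  refine ⟨2 * ‖(k : H →L[ℂ] H)‖, fun ε ξ hξ hε => ?_⟩
  have hnorm : ‖h ξ‖ ≤ √ε := by
    apply Real.le_sqrt_of_sq_le
    have e1 : ‖h ξ‖ ^ 2 = RCLike.re (inner ℂ ((h * h) ξ) ξ) := by
      rw [mul_apply_eq_comp, hinn, ← inner_self_eq_norm_sq (𝕜 := ℂ)]
    rw [e1, hhh]
    have : (algebraMap ℝ (H →L[ℂ] H) N - x) ξ = (N : ℂ) • ξ - (x : H →L[ℂ] H) ξ := by
      rw [hal]; simp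
    rw [this, inner_sub_left, inner_smul_left, map_sub]
    have e2 : (inner ℂ ξ ξ : ℂ) = 1 := by rw [inner_self_eq_norm_sq_to_K, hξ]; simp
    rw [e2]
    simp only [Complex.conj_ofReal, mul_one]
    have : RCLike.re (N : ℂ) = N := Complex.ofReal_re N
    rw [this]; linarith
  have e3 : (inner ℂ ((D x : H →L[ℂ] H) ξ) ξ : ℂ)
      = -(inner ℂ ((k : H →L[ℂ] H) (h ξ)) ξ + inner ℂ ((k : H →L[ℂ] H) ξ) (h ξ)) := by
    rw [hDx]
    simp only [neg_apply, add_apply,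
      mul_apply_eq_comp, inner_neg_left, inner_add_left, hinn]
  rw [e3]
  refine (RCLike.abs_re_le_norm _).trans ?_
  rw [norm_neg]
  refine (norm_add_le _ _).trans ?_
  have n1 : ‖(inner ℂ ((k : H →L[ℂ] H) (h ξ)) ξ : ℂ)‖ ≤ ‖(k : H →L[ℂ] H)‖ * √ε := by
    refine (norm_inner_le_norm _ _).trans ?_
    rw [hξ, mul_one]
    exact (ContinuousLinearMap.le_opNorm _ _).trans (by gcongr)
  have n2 : ‖(inner ℂ ((k : H →L[ℂ] H) ξ) (h ξ) : ℂ)‖ ≤ ‖(k : H →L[ℂ] H)‖ * √ε := by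
    refine (norm_inner_le_norm _ _).trans ?_
    have := (k : H →L[ℂ] H).le_opNorm ξ
    rw [hξ, mul_one] at this
    gcongr
  linarith

/-- Dissipativity of derivations on self-adjoint elements. -/
lemma d_dissip (hD : IsDerivation M D) (x : M) (hx : IsSelfAdjoint (x : H →L[ℂ] H)) (t : ℝ) :
    ‖(x : H →L[ℂ] H)‖ ≤ ‖(x : H →L[ℂ] H) - t • ((D x : H →L[ℂ] H) + star (D x : H →L[ℂ] H))‖ := by
  obtain ⟨K₁, hK₁⟩ := d_numeric hD x hx
  obtain ⟨K₂, hK₂⟩ := d_numeric hD (-x) (by simpa using hx.neg)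
  by_cases hx0 : (x : H →L[ℂ] H) = 0
  · rw [hx0]; simp
  set N := ‖(x : H →L[ℂ] H)‖ with hN
  set R := ‖(x : H →L[ℂ] H) - t • ((D x : H →L[ℂ] H) + star (D x : H →L[ℂ] H))‖ with hR
  have key : ∀ ε : ℝ, 0 < ε → ε < N → N - ε - 2 * |t| * ((|K₁| + |K₂|) * √ε) ≤ R := by
    intro ε hε hεN
    have hsup : ∃ ξ : H, ‖ξ‖ = 1 ∧
        N - ε ≤ |RCLike.re (inner ℂ ((x : H →L[ℂ] H) ξ) ξ)| := by
      have hs := (x : H →L[ℂ] H).norm_eq_iSup_rayleighQuotient hx.isSymmetric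
      have hlt : N - ε < ⨆ v, |(x : H →L[ℂ] H).rayleighQuotient v| := by
        rw [← hs]; linarith
      obtain ⟨v, hv⟩ := exists_lt_of_lt_ciSup hlt
      have hv0 : v ≠ 0 := by
        rintro rfl
        simp [ContinuousLinearMap.rayleighQuotient] at hv
        linarith
      have hvn : ‖v‖ ≠ 0 := by simpa using hv0
      refine ⟨((‖v‖⁻¹ : ℝ) : ℂ) • v, ?_, ?_⟩
      · rw [norm_smul]; simp [hvn]
      · refine hv.le.trans (le_of_eq ?_)
        rw [ContinuousLinearMap.rayleighQuotient, ContinuousLinearMap.reApplyInnerSelf_apply,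
          map_smul, inner_smul_left, inner_smul_right, ← mul_assoc, Complex.conj_ofReal,
          ← Complex.ofReal_mul]
        congr 1
        have : ∀ (r : ℝ) (z : ℂ), RCLike.re ((r : ℂ) * z) = r * RCLike.re z :=
          fun r z => RCLike.re_ofReal_mul r z
        rw [this]
        field_simp
    obtain ⟨ξ, hξ, hξx⟩ := hsup
    have hDb : |RCLike.re (inner ℂ ((D x : H →L[ℂ] H) ξ) ξ)| ≤ (|K₁| + |K₂|) * √ε := by
      rcases le_total 0 (RCLike.re (inner ℂ ((x : H →L[ℂ] H) ξ) ξ)) with h | h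
      · rw [abs_of_nonneg h] at hξx
        refine (hK₁ ε ξ hξ hξx).trans ?_
        gcongr
        exact (le_abs_self K₁).trans (le_add_of_nonneg_right (abs_nonneg _))
      · rw [abs_of_nonpos h] at hξx
        have := hK₂ ε ξ hξ (by simpa using hξx)
        rw [d_neg hD] at this
        have h2 : |RCLike.re (inner ℂ ((D x : H →L[ℂ] H) ξ) ξ)| ≤ K₂ * √ε := by
          simpa using this
        refine h2.trans ?_
        gcongr
        exact (le_abs_self K₂).trans (le_add_of_nonneg_left (abs_nonneg _))
    have e : RCLike.re (inner ℂ (((x : H →L[ℂ] H) -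
        t • ((D x : H →L[ℂ] H) + star (D x : H →L[ℂ] H))) ξ) ξ)
        = RCLike.re (inner ℂ ((x : H →L[ℂ] H) ξ) ξ)
          - 2 * t * RCLike.re (inner ℂ ((D x : H →L[ℂ] H) ξ) ξ) := by
      have e1 : (inner ℂ ((star (D x : H →L[ℂ] H)) ξ) ξ : ℂ)
          = (starRingEnd ℂ) (inner ℂ ((D x : H →L[ℂ] H) ξ) ξ) := by
        rw [ContinuousLinearMap.star_eq_adjoint, ContinuousLinearMap.adjoint_inner_left,
          inner_conj_symm]
      have e2 : t • (((D x : H →L[ℂ] H) + star (D x : H →L[ℂ] H)) ξ)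
          = (t : ℂ) • (((D x : H →L[ℂ] H) + star (D x : H →L[ℂ] H)) ξ) := by simp
      rw [sub_apply, smul_apply, e2, inner_sub_left,
        inner_smul_left, add_apply, inner_add_left, e1, Complex.conj_ofReal]
      have e3 : ∀ z : ℂ, RCLike.re ((t : ℂ) * (z + (starRingEnd ℂ) z)) = 2 * t * RCLike.re z := by
        intro z
        simp
        ring
      rw [map_sub, e3]
    have hb : |RCLike.re (inner ℂ (((x : H →L[ℂ] H) -
        t • ((D x : H →L[ℂ] H) + star (D x : H →L[ℂ] H))) ξ) ξ)| ≤ R := by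
      refine (RCLike.abs_re_le_norm _).trans ?_
      refine (norm_inner_le_norm _ _).trans ?_
      rw [hξ, mul_one]
      have := ContinuousLinearMap.le_opNorm ((x : H →L[ℂ] H) -
        t • ((D x : H →L[ℂ] H) + star (D x : H →L[ℂ] H))) ξ
      rwa [hξ, mul_one] at this
    rw [e] at hb
    have tri := abs_sub_abs_le_abs_sub (RCLike.re (inner ℂ ((x : H →L[ℂ] H) ξ) ξ))
      (2 * t * RCLike.re (inner ℂ ((D x : H →L[ℂ] H) ξ) ξ))
    have : |2 * t * RCLike.re (inner ℂ ((D x : H →L[ℂ] H) ξ) ξ)|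
        ≤ 2 * |t| * ((|K₁| + |K₂|) * √ε) := by
      rw [abs_mul, abs_mul, abs_two]
      gcongr
    linarith
  have hNpos : 0 < N := by simpa [hN] using hx0
  have hlim : Tendsto (fun ε : ℝ => N - ε - 2 * |t| * ((|K₁| + |K₂|) * √ε)) (𝓝[>] 0)
      (𝓝 (N - 0 - 2 * |t| * ((|K₁| + |K₂|) * √0))) := by
    apply Tendsto.mono_left _ nhdsWithin_le_nhds
    apply Continuous.tendsto
    fun_prop
  simp only [Real.sqrt_zero, mul_zero, sub_zero] at hlim
  refine le_of_tendsto hlim ?_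
  filter_upwards [Ioo_mem_nhdsGT hNpos] with ε hε
  exact key ε hε.1 hε.2

/-- The real space of self-adjoint elements of `M`. -/
def saSub (M : VonNeumannAlgebra H) : Submodule ℝ (H →L[ℂ] H) where
  carrier := {x | x ∈ M ∧ IsSelfAdjoint x}
  add_mem' h1 h2 := ⟨add_mem h1.1 h2.1, h1.2.add h2.2⟩
  zero_mem' := ⟨zero_mem _, IsSelfAdjoint.zero _⟩
  smul_mem' r x h := by
    refine ⟨?_, ?_⟩
    · have : r • x = (r : ℂ) • x := by ext v; simp
      rw [this]; exact SMulMemClass.smul_mem _ h.1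
    · exact IsSelfAdjoint.smul (by simp [IsSelfAdjoint]) h.2

lemma saSub_isClosed (M : VonNeumannAlgebra H) :
    IsClosed ((saSub M : Submodule ℝ (H →L[ℂ] H)) : Set (H →L[ℂ] H)) :=
  (vn_isClosed M).inter (isClosed_eq continuous_star continuous_id)

/-- A derivation restricted to self-adjoint elements. -/
def saMap (hD : IsDerivation M D) : saSub M →ₗ[ℝ] (H →L[ℂ] H) where
  toFun x := D ⟨x.1, x.2.1⟩
  map_add' x y := by
    have := hD.1 ⟨x.1, x.2.1⟩ ⟨y.1, y.2.1⟩
    exact congr(Subtype.val $this)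
  map_smul' r x := by
    have := hD.2.1 r ⟨x.1, x.2.1⟩
    have e : (⟨(r • x).1, (r • x).2.1⟩ : M) = (r : ℂ) • (⟨x.1, x.2.1⟩ : M) := by
      ext v; simp
    simp only [e, this]
    ext v; simp

lemma saMap_re_zero (hD : IsDerivation M D) (u : ℕ → saSub M) (b : H →L[ℂ] H)
    (hu : Tendsto u atTop (𝓝 0)) (hb : Tendsto (saMap hD ∘ u) atTop (𝓝 b)) :
    b + star b = 0 := by
  have hbM : b ∈ M := (vn_isClosed M).mem_of_tendsto hb (Eventually.of_forall fun n => Subtype.mem _)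
  have hcM : b + star b ∈ saSub M := ⟨add_mem hbM (star_mem hbM), IsSelfAdjoint.add_star_self b⟩
  set c : saSub M := ⟨b + star b, hcM⟩ with hc
  set w := saMap hD c + star (saMap hD c) with hw
  have key : ∀ s : ℝ, 0 < s → ‖(b + star b)‖ ≤ s⁻¹ * ‖w‖ := by
    intro s hs
    have h1 : ∀ n, ‖((c + s • u n : saSub M) : H →L[ℂ] H)‖ ≤
        ‖((c + s • u n : saSub M) : H →L[ℂ] H) - s⁻¹ • w
          - (saMap hD (u n) + star (saMap hD (u n)))‖ := by
      intro n
      have h := d_dissip hD ⟨(c + s • u n : saSub M).1, (c + s • u n : saSub M).2.1⟩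
        (c + s • u n : saSub M).2.2 s⁻¹
      have e : (D ⟨(c + s • u n : saSub M).1, (c + s • u n : saSub M).2.1⟩ : H →L[ℂ] H)
        = saMap hD c + s • saMap hD (u n) := by
        have := map_add (saMap hD) c (s • u n)
        rw [map_smul] at this
        exact this
      rw [e] at h
      refine h.trans (le_of_eq ?_)
      congr 1
      have es : star (saMap hD c + s • saMap hD (u n))
          = star (saMap hD c) + s • star (saMap hD (u n)) := by
        rw [star_add, star_smul, star_trivial s]
      rw [es, hw]
      have : s⁻¹ • (saMap hD c + s • saMap hD (u n) +
          (star (saMap hD c) + s • star (saMap hD (u n))))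
          = s⁻¹ • (saMap hD c + star (saMap hD c)) +
            (s⁻¹ * s) • (saMap hD (u n) + star (saMap hD (u n))) := by
        module
      rw [this, inv_mul_cancel₀ hs.ne', one_smul]
      abel
    have hu' : Tendsto (fun n => ((c + s • u n : saSub M) : H →L[ℂ] H)) atTop (𝓝 (b + star b)) := by
      have : Tendsto (fun n => (c + s • u n : saSub M)) atTop (𝓝 (c + s • 0)) :=
        tendsto_const_nhds.add (hu.const_smul s)
      rw [smul_zero, add_zero] at this
      exact (continuous_subtype_val.tendsto c).comp this
    have hl := hu'.norm
    have hb' : Tendsto (fun n => saMap hD (u n) + star (saMap hD (u n))) atTop (𝓝 (b + star b)) :=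
      Tendsto.add hb ((continuous_star.tendsto b).comp hb)
    have hr := ((hu'.sub_const (s⁻¹ • w)).sub hb').norm
    have := le_of_tendsto_of_tendsto' hl hr h1
    refine this.trans (le_of_eq ?_)
    have : b + star b - s⁻¹ • w - (b + star b) = -(s⁻¹ • w) := by abel
    rw [this, norm_neg, norm_smul, Real.norm_of_nonneg (by positivity)]
  have hlim : Tendsto (fun s : ℝ => s⁻¹ * ‖w‖) atTop (𝓝 (0 * ‖w‖)) :=
    tendsto_inv_atTop_zero.mul_const _
  rw [zero_mul] at hlim
  have : ‖b + star b‖ ≤ 0 := ge_of_tendsto hlim (by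
    filter_upwards [eventually_gt_atTop 0] with s hs using key s hs)
  simpa using this

/-- Automatic continuity of derivations on self-adjoint elements. -/
lemma d_bounded (hD : IsDerivation M D) :
    ∃ C : ℝ, 0 ≤ C ∧ ∀ x : M, IsSelfAdjoint (x : H →L[ℂ] H) →
      ‖(D x : H →L[ℂ] H)‖ ≤ C * ‖(x : H →L[ℂ] H)‖ := by
  have : CompleteSpace (saSub M) := (saSub_isClosed M).completeSpace_coe
  have hcont : Continuous (saMap hD) := by
    apply LinearMap.continuous_of_seq_closed_graph
    intro u x y hu hy
    have hu' : Tendsto (fun n => u n - x) atTop (𝓝 0) := by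
      simpa using hu.sub_const x
    have hy' : Tendsto (saMap hD ∘ (fun n => u n - x)) atTop (𝓝 (y - saMap hD x)) := by
      have := hy.sub_const (saMap hD x)
      refine this.congr fun n => ?_
      simp
    have h1 := saMap_re_zero hD _ _ hu' hy'
    have hD' := d_smul hD Complex.I
    have hy'' : Tendsto (saMap hD' ∘ (fun n => u n - x)) atTop
        (𝓝 (Complex.I • (y - saMap hD x))) :=
      (hy'.const_smul Complex.I).congr fun n => rfl
    have h2 := saMap_re_zero hD' _ _ hu' hy''
    set b := y - saMap hD x with hb
    have h3 : Complex.I • b - Complex.I • star b = 0 := by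
      rw [star_smul] at h2
      simpa [sub_eq_add_neg] using h2
    have h4 : b - star b = 0 := by
      rw [← smul_sub] at h3
      exact (smul_eq_zero.1 h3).resolve_left Complex.I_ne_zero
    have h5 : (2 : ℝ) • b = 0 := by
      rw [two_smul]
      have := congr($h1 + $h4)
      simpa using this
    have h6 : b = 0 := (smul_eq_zero.1 h5).resolve_left two_ne_zero
    exact sub_eq_zero.1 h6
  let T : saSub M →L[ℝ] (H →L[ℂ] H) := ⟨saMap hD, hcont⟩
  refine ⟨‖T‖, T.opNorm_nonneg, fun x hx => ?_⟩
  exact T.le_opNorm ⟨x.1, x.2, hx⟩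

end IsDerivation

namespace FNSTrace

variable {M : VonNeumannAlgebra H} (t : FNSTrace M)

/-- Compression of the trace by `p`. -/
noncomputable def gF (p x : M) : ℝ := (t.τ (p * x * p)).toReal

/-- Real part of the linear extension of the compressed trace. -/
noncomputable def psi (p x : M) : ℝ :=
  gF t p (x + star x + ((2 * ‖(x : H →L[ℂ] H)‖ : ℝ) : ℂ) • 1) / 2
    - ‖(x : H →L[ℂ] H)‖ * gF t p 1

lemma isPos_iff {x : M} : IsPos M x ↔ 0 ≤ (x : H →L[ℂ] H) :=
  (ContinuousLinearMap.nonneg_iff_isPositive _).symm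

lemma isPos_add {x y : M} (hx : IsPos M x) (hy : IsPos M y) : IsPos M (x + y) := by
  rw [isPos_iff] at *
  exact add_nonneg hx hy

lemma isPos_one : IsPos M 1 := by
  rw [isPos_iff]
  exact zero_le_one

lemma isPos_smul {x : M} (hx : IsPos M x) {c : ℝ} (hc : 0 ≤ c) : IsPos M ((c : ℂ) • x) :=
  ContinuousLinearMap.IsPositive.smul_of_nonneg hx (by exact_mod_cast hc)

lemma tau_mono {x y : M} (hx : IsPos M x) (hxy : (x : H →L[ℂ] H) ≤ y) : t.τ x ≤ t.τ y := by
  have h : IsPos M (y - x) := by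
    rw [isPos_iff]; exact sub_nonneg.2 hxy
  have := t.additive x (y - x) hx h
  rw [add_sub_cancel] at this
  rw [this]
  exact le_self_add

variable {t} {p : M}

lemma isPos_conj (hp : IsStarProjection (p : H →L[ℂ] H)) {x : M} (hx : IsPos M x) :
    IsPos M (p * x * p) := by
  rw [isPos_iff] at *
  exact hp.isSelfAdjoint.conjugate_nonneg hx

lemma tau_fin (hp : IsStarProjection (p : H →L[ℂ] H)) (hfin : t.τ p < ⊤) {x : M}
    (hx : IsPos M x) : t.τ (p * x * p) < ⊤ := by
  set c : ℝ≥0 := ‖(x : H →L[ℂ] H)‖₊ with hc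
  have hpp : IsPos M p := by rw [isPos_iff]; exact hp.nonneg
  have h1 := t.pos_smul c p hpp
  refine lt_of_le_of_lt (tau_mono t (y := ((c : ℝ≥0) : ℂ) • p) (isPos_conj hp hx) ?_) ?_
  · have h2 := CStarAlgebra.star_left_conjugate_le_norm_smul (a := (p : H →L[ℂ] H))
      (b := (x : H →L[ℂ] H)) (IsSelfAdjoint.of_nonneg (isPos_iff.1 hx))
    rw [hp.isSelfAdjoint.star_eq, hp.isIdempotentElem.eq] at h2
    refine h2.trans (le_of_eq ?_)
    ext v; simp [hc]
  · rw [h1]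
    exact ENNReal.mul_lt_top ENNReal.coe_lt_top hfin

lemma gF_add (hp : IsStarProjection (p : H →L[ℂ] H)) (hfin : t.τ p < ⊤) {x y : M}
    (hx : IsPos M x) (hy : IsPos M y) : gF t p (x + y) = gF t p x + gF t p y := by
  unfold gF
  rw [mul_add, add_mul, t.additive _ _ (isPos_conj hp hx) (isPos_conj hp hy),
    ENNReal.toReal_add (tau_fin hp hfin hx).ne (tau_fin hp hfin hy).ne]

lemma gF_smul (hp : IsStarProjection (p : H →L[ℂ] H)) {x : M}
    (hx : IsPos M x) {c : ℝ} (hc : 0 ≤ c) : gF t p ((c : ℂ) • x) = c * gF t p x := by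
  unfold gF
  lift c to ℝ≥0 using hc
  have h := t.pos_smul c (p * x * p) (isPos_conj hp hx)
  have e : p * ((c : ℂ) • x) * p = (c : ℂ) • (p * x * p) := by ext v; simp
  rw [e, h, ENNReal.toReal_mul]
  rfl

lemma gF_nonneg (x : M) : 0 ≤ gF t p x := ENNReal.toReal_nonneg

lemma isPos_shift (x : M) {c : ℝ} (hc : ‖(x : H →L[ℂ] H)‖ ≤ c) :
    IsPos M (x + star x + ((2 * c : ℝ) : ℂ) • 1) := by
  rw [isPos_iff]
  have hsa : IsSelfAdjoint ((x : H →L[ℂ] H) + star (x : H →L[ℂ] H)) :=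
    IsSelfAdjoint.add_star_self _
  have h1 := hsa.neg_algebraMap_norm_le_self
  have h2 : ‖(x : H →L[ℂ] H) + star (x : H →L[ℂ] H)‖ ≤ 2 * c := by
    refine (norm_add_le _ _).trans ?_
    rw [norm_star]; linarith
  have h3 : algebraMap ℝ (H →L[ℂ] H) ‖(x : H →L[ℂ] H) + star (x : H →L[ℂ] H)‖
      ≤ algebraMap ℝ (H →L[ℂ] H) (2 * c) := algebraMap_mono _ h2
  have e : ((x + star x + ((2 * c : ℝ) : ℂ) • 1 : M) : H →L[ℂ] H)
      = ((x : H →L[ℂ] H) + star (x : H →L[ℂ] H)) + algebraMap ℝ (H →L[ℂ] H) (2 * c) := by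
    generalize 2 * c = r
    ext v; simp [Algebra.algebraMap_eq_smul_one]
  rw [e]
  have h4 := add_le_add h1 h3
  rwa [neg_add_cancel] at h4

lemma psi_eq (hp : IsStarProjection (p : H →L[ℂ] H)) (hfin : t.τ p < ⊤) (x : M) {c : ℝ}
    (hc : ‖(x : H →L[ℂ] H)‖ ≤ c) :
    psi t p x = gF t p (x + star x + ((2 * c : ℝ) : ℂ) • 1) / 2 - c * gF t p 1 := by
  set N := ‖(x : H →L[ℂ] H)‖ with hN
  have e : x + star x + ((2 * c : ℝ) : ℂ) • (1 : M)
      = (x + star x + ((2 * N : ℝ) : ℂ) • (1 : M)) + ((2 * (c - N) : ℝ) : ℂ) • (1 : M) := by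
    ext v; simp; module
  have h0 : 0 ≤ 2 * (c - N) := by linarith
  rw [e, gF_add hp hfin (isPos_shift x le_rfl) (isPos_smul isPos_one h0),
    gF_smul hp isPos_one h0]
  unfold psi
  ring

lemma psi_add (hp : IsStarProjection (p : H →L[ℂ] H)) (hfin : t.τ p < ⊤) (x y : M) :
    psi t p (x + y) = psi t p x + psi t p y := by
  set N := ‖(x : H →L[ℂ] H)‖ with hN
  set K := ‖(y : H →L[ℂ] H)‖ with hK
  rw [psi_eq hp hfin x le_rfl, psi_eq hp hfin y le_rfl,
    psi_eq hp hfin (x + y) (c := N + K) (norm_add_le _ _)]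
  have e : x + y + star (x + y) + ((2 * (N + K) : ℝ) : ℂ) • (1 : M)
      = (x + star x + ((2 * N : ℝ) : ℂ) • (1 : M)) + (y + star y + ((2 * K : ℝ) : ℂ) • (1 : M)) := by
    ext v; simp; module
  rw [e, gF_add hp hfin (isPos_shift x le_rfl) (isPos_shift y le_rfl)]
  ring

lemma psi_zero (hp : IsStarProjection (p : H →L[ℂ] H)) (hfin : t.τ p < ⊤) :
    psi t p 0 = 0 := by
  have := psi_add hp hfin 0 0
  rw [add_zero] at this
  linarith

lemma psi_neg (hp : IsStarProjection (p : H →L[ℂ] H)) (hfin : t.τ p < ⊤) (x : M) :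
    psi t p (-x) = -psi t p x := by
  have := psi_add hp hfin x (-x)
  rw [add_neg_cancel, psi_zero hp hfin] at this
  linarith

lemma psi_sub (hp : IsStarProjection (p : H →L[ℂ] H)) (hfin : t.τ p < ⊤) (x y : M) :
    psi t p (x - y) = psi t p x - psi t p y := by
  rw [sub_eq_add_neg, psi_add hp hfin, psi_neg hp hfin, sub_eq_add_neg]

lemma psi_star (x : M) : psi t p (star x) = psi t p x := by
  unfold psi
  have : ‖((star x : M) : H →L[ℂ] H)‖ = ‖(x : H →L[ℂ] H)‖ := norm_star (x : H →L[ℂ] H)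
  rw [this, star_star, add_comm (star x) x]

lemma psi_pos (hp : IsStarProjection (p : H →L[ℂ] H)) (hfin : t.τ p < ⊤) {x : M}
    (hx : IsPos M x) : psi t p x = gF t p x := by
  unfold psi
  have hs : star x = x := by
    ext1; exact (IsSelfAdjoint.of_nonneg (isPos_iff.1 hx)).star_eq
  have h0 : 0 ≤ 2 * ‖(x : H →L[ℂ] H)‖ := by positivity
  rw [hs, gF_add hp hfin (isPos_add hx hx) (isPos_smul isPos_one h0), gF_add hp hfin hx hx,
    gF_smul hp isPos_one h0]
  ring

lemma psi_bound (hp : IsStarProjection (p : H →L[ℂ] H)) (hfin : t.τ p < ⊤) (x : M) :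
    |psi t p x| ≤ ‖(x : H →L[ℂ] H)‖ * gF t p 1 := by
  have key : ∀ y : M, -(‖(y : H →L[ℂ] H)‖ * gF t p 1) ≤ psi t p y := by
    intro y
    have := gF_nonneg (t := t) (p := p)
      (y + star y + ((2 * ‖(y : H →L[ℂ] H)‖ : ℝ) : ℂ) • 1)
    unfold psi
    linarith
  have h1 := key x
  have h2 := key (-x)
  rw [psi_neg hp hfin] at h2
  have : ‖((-x : M) : H →L[ℂ] H)‖ = ‖(x : H →L[ℂ] H)‖ := norm_neg (x : H →L[ℂ] H)
  rw [this] at h2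
  exact abs_le.2 ⟨h1, by linarith⟩

lemma proj_mul (hp : IsStarProjection (p : H →L[ℂ] H)) : p * p = p := by
  ext1; exact hp.isIdempotentElem

lemma proj_star (hp : IsStarProjection (p : H →L[ℂ] H)) : star p = p := by
  ext1; exact hp.isSelfAdjoint

lemma psi_conj (hp : IsStarProjection (p : H →L[ℂ] H)) (hfin : t.τ p < ⊤) (x : M) :
    psi t p (p * x * p) = psi t p x := by
  have hpp := proj_mul hp
  have hn : ‖(p : H →L[ℂ] H)‖ ≤ 1 := hp.norm_le
  have hc : ‖((p * x * p : M) : H →L[ℂ] H)‖ ≤ ‖(x : H →L[ℂ] H)‖ := by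
    have : ‖(p : H →L[ℂ] H) * x * p‖ ≤ ‖(p : H →L[ℂ] H)‖ * ‖(x : H →L[ℂ] H)‖ * ‖(p : H →L[ℂ] H)‖ :=
      (norm_mul_le _ _).trans (by gcongr; exact norm_mul_le _ _)
    refine this.trans ?_
    have h0 := norm_nonneg (x : H →L[ℂ] H)
    have h1 := norm_nonneg (p : H →L[ℂ] H)
    calc _ ≤ 1 * ‖(x : H →L[ℂ] H)‖ * 1 := by gcongr
      _ = _ := by ring
  rw [psi_eq hp hfin _ hc, psi_eq hp hfin x le_rfl]
  congr 2
  unfold gF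
  congr 2
  rw [star_mul, star_mul, proj_star hp]
  have e1 : p * (p * x * p) * p = p * x * p := by
    rw [mul_assoc p x p, ← mul_assoc p p, hpp, mul_assoc, mul_assoc, hpp]
  have e2 : p * (p * (star x * p)) * p = p * star x * p := by
    rw [← mul_assoc p p, hpp, mul_assoc, mul_assoc, mul_assoc, hpp]
  simp only [mul_add, add_mul, e1, e2]

lemma psi_trace (hp : IsStarProjection (p : H →L[ℂ] H)) (hfin : t.τ p < ⊤) {x y : M}
    (hx : p * x * p = x) (hy : p * y * p = y) : psi t p (x * y) = psi t p (y * x) := by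
  have hpp := proj_mul hp
  have base : ∀ z : M, p * z * p = z → psi t p (z * star z) = psi t p (star z * z) := by
    intro z hz
    have hz1 : p * z = z := by rw [← hz, ← mul_assoc, ← mul_assoc, hpp]
    have hz2 : z * p = z := by rw [← hz, mul_assoc, hpp]
    have hs1 : star z * p = star z := by
      have := congr(star $hz1); rwa [star_mul, proj_star hp] at this
    have hs2 : p * star z = star z := by
      have := congr(star $hz2); rwa [star_mul, proj_star hp] at this
    have q1 : IsPos M (z * star z) := by
      rw [isPos_iff]; exact mul_star_self_nonneg (z : H →L[ℂ] H)
    have q2 : IsPos M (star z * z) := by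
      rw [isPos_iff]; exact star_mul_self_nonneg (z : H →L[ℂ] H)
    rw [psi_pos hp hfin q1, psi_pos hp hfin q2]
    unfold gF
    rw [← mul_assoc p z, hz1, mul_assoc z, hs1, ← mul_assoc p (star z), hs2, mul_assoc _ z, hz2,
      t.tracial]
  have hys : p * star y * p = star y := by
    have := congr(star $hy)
    rwa [star_mul, star_mul, proj_star hp, ← mul_assoc] at this
  have h := base (x + star y) (by rw [mul_add, add_mul, hx, hys])
  have hbx := base x hx
  have hby := base (star y) hys
  rw [star_star] at hby
  rw [star_add, star_star, add_mul, mul_add, mul_add, add_mul, mul_add, mul_add] at h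
  simp only [psi_add hp hfin] at h
  have s1 : psi t p (star y * star x) = psi t p (x * y) := by
    rw [← star_mul, psi_star]
  have s2 : psi t p (star x * star y) = psi t p (y * x) := by
    rw [← star_mul, psi_star]
  linarith

end FNSTrace

namespace FNSTrace

variable {M : VonNeumannAlgebra H} {t : FNSTrace M} {p : M}

lemma psi_D_proj (hp : IsStarProjection (p : H →L[ℂ] H)) (hfin : t.τ p < ⊤) {D : M → M}
    (hD : IsDerivation M D) {q : M} (hq : q * q = q) (hpq : p * q = q) (hqp : q * p = q) :
    psi t p (D q) = 0 := by
  have hpp := proj_mul hp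
  set d := D q with hd
  have h1 : d = d * q + q * d := by
    have := hD.2.2 q q
    rwa [hq] at this
  have h2 : q * d * q = 0 := by
    have h3 : q * d * q = q * d * q + q * d * q := by
      have h4 : q * d * q = q * (d * q + q * d) * q := by rw [← h1]
      rw [mul_add, add_mul, ← mul_assoc, ← mul_assoc, mul_assoc (q * d) q q, hq] at h4
      exact h4
    simpa using h3
  have hw : p * (p * d * p) * p = p * d * p := by
    rw [mul_assoc p d p, ← mul_assoc p p, hpp, mul_assoc, mul_assoc, hpp]
  have hqc : p * q * p = q := by rw [hpq, hqp]
  have hdq : p * d * q = (p * d * p) * q * q := by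
    rw [mul_assoc (p * d * p) q q, hq, mul_assoc (p * d) p q, hpq]
  have hqd : q * d * p = q * (q * (p * d * p)) := by
    rw [← mul_assoc q q, hq, ← mul_assoc, ← mul_assoc, hqp]
  have hq0 : q * (p * d * p) * q = 0 := by
    rw [← mul_assoc, ← mul_assoc, hqp, mul_assoc, hpq, h2]
  have c1 : psi t p (d * q) = 0 := by
    rw [← psi_conj hp hfin (d * q)]
    have e : p * (d * q) * p = (p * d * p * q) * q := by
      rw [← hdq, ← mul_assoc, mul_assoc _ q p, hqp]
    rw [e, psi_trace hp hfin _ hqc, ← mul_assoc, hq0, psi_zero hp hfin]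
    rw [← mul_assoc, ← mul_assoc, ← mul_assoc, hpp, mul_assoc _ q p, hqp]
  have c2 : psi t p (q * d) = 0 := by
    rw [← psi_conj hp hfin (q * d)]
    have e : p * (q * d) * p = q * (q * (p * d * p)) := by
      rw [← hqd, ← mul_assoc, hpq]
    rw [e, psi_trace hp hfin hqc, hq0, psi_zero hp hfin]
    rw [← mul_assoc, hpq, mul_assoc, mul_assoc, hpp]
  rw [h1, psi_add hp hfin, c1, c2, add_zero]

/-- One bisection step. -/
lemma bisect (hp : IsStarProjection (p : H →L[ℂ] H)) {a : M}
    (ha0 : 0 ≤ (a : H →L[ℂ] H)) (hap : (a : H →L[ℂ] H) ≤ p) :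
    ∃ q r : M, q * q = q ∧ p * q = q ∧ q * p = q ∧ 0 ≤ (r : H →L[ℂ] H) ∧
      (r : H →L[ℂ] H) ≤ p ∧ a + a = q + r := by
  obtain ⟨P, hP⟩ := p
  obtain ⟨A, hA⟩ := a
  simp only at hp ha0 hap
  have hAsa : star A = A := (IsSelfAdjoint.of_nonneg ha0).star_eq
  have hPsa : star P = P := hp.isSelfAdjoint.star_eq
  have hPP : P * P = P := hp.isIdempotentElem
  -- A (1-P) = 0
  have hA1 : A * (1 - P) = 0 := by
    have h1 : (1 - P) * A * (1 - P) ≤ (1 - P) * P * (1 - P) :=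
      (hp.one_sub.isSelfAdjoint).conjugate_le_conjugate hap
    have h2 : (1 - P) * P = 0 := by rw [sub_mul, one_mul, hPP, sub_self]
    rw [h2, zero_mul] at h1
    have h3 : 0 ≤ (1 - P) * A * (1 - P) := hp.one_sub.isSelfAdjoint.conjugate_nonneg ha0
    have h4 := le_antisymm h1 h3
    set s := CFC.sqrt A with hs
    have hss : s * s = A := CFC.sqrt_mul_sqrt_self _ ha0
    have hssa : star s = s := (IsSelfAdjoint.of_nonneg (CFC.sqrt_nonneg A)).star_eq
    have h5 : star (s * (1 - P)) * (s * (1 - P)) = 0 := by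
      rw [star_mul, hssa, hp.one_sub.isSelfAdjoint.star_eq, ← h4, ← hss]
      simp only [mul_assoc]
    have h6 : s * (1 - P) = 0 := (CStarRing.star_mul_self_eq_zero_iff _).1 h5
    rw [← hss, mul_assoc, h6, mul_zero]
  have hAP : A * P = A := by
    rw [mul_sub, mul_one, sub_eq_zero] at hA1; exact hA1.symm
  set X := A + A - P with hX
  have hXM : X ∈ M := sub_mem (add_mem hA hA) hP
  have hXsa : IsSelfAdjoint X := by
    rw [IsSelfAdjoint, hX, star_sub, star_add, hAsa, hPsa]
  obtain ⟨Q, Y, Z, hQM, hQ, hY, hZ, hXYZ, hYQ, hZQ, -, hQe⟩ := vn_spectral M hXM hXsa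
  have hQQ : Q * Q = Q := hQ.isIdempotentElem
  have hQsa : star Q = Q := hQ.isSelfAdjoint.star_eq
  have hYsa : star Y = Y := (IsSelfAdjoint.of_nonneg hY).star_eq
  have hZsa : star Z = Z := (IsSelfAdjoint.of_nonneg hZ).star_eq
  have hXP : X * (1 - P) = 0 := by
    rw [hX, mul_sub, mul_one, sub_mul, add_mul, hAP, hPP, sub_self]
  have hQP : Q * P = Q := by
    have := hQe _ hXP
    rw [mul_sub, mul_one, sub_eq_zero] at this; exact this.symm
  have hPQ : P * Q = Q := by
    have := congr(star $hQP); rwa [star_mul, hPsa, hQsa] at this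
  have hQY : Q * Y = Y := by
    have := congr(star $hYQ); rwa [star_mul, hQsa, hYsa] at this
  have hQZ : Q * Z = 0 := by
    have := congr(star $hZQ); rwa [star_mul, hQsa, hZsa, star_zero] at this
  have hYP : Y * P = Y := by rw [← hYQ, mul_assoc, hQP]
  have hXPX : X * P = X := by rw [mul_sub, mul_one, sub_eq_zero] at hXP; exact hXP.symm
  have hZX : Z = Y - X := by rw [hXYZ]; abel
  have hZP : Z * P = Z := by rw [hZX, sub_mul, hYP, hXPX]
  have hPZ : P * Z = Z := by
    have := congr(star $hZP); rwa [star_mul, hPsa, hZsa] at this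
  have hAA : A + A = Y - Z + P := by rw [← hXYZ, hX]; abel
  have hPQsa : IsSelfAdjoint (P - Q) := hp.isSelfAdjoint.sub hQ.isSelfAdjoint
  -- lower: Z ≤ P - Q
  have hlow : 0 ≤ P - Q - Z := by
    have h := hPQsa.conjugate_nonneg (add_nonneg ha0 ha0)
    have e : (P - Q) * (A + A) * (P - Q) = P - Q - Z := by
      rw [hAA]
      simp only [mul_add, mul_sub, add_mul, sub_mul, hYP, hYQ, hZP, hZQ, hPP, hPQ, hQP, hQQ, hPZ,
        hQZ, hQY, mul_assoc, zero_mul, mul_zero]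
      abel
    rwa [e] at h
  have hup : 0 ≤ Q - Y := by
    have h := hQ.isSelfAdjoint.conjugate_nonneg (add_nonneg (sub_nonneg.2 hap) (sub_nonneg.2 hap))
    have e : Q * (P - A + (P - A)) * Q = Q - Y := by
      have : P - A + (P - A) = P + P - (A + A) := by abel
      rw [this, hAA]
      simp only [mul_add, mul_sub, add_mul, sub_mul, hYP, hYQ, hZP, hZQ, hPP, hPQ, hQP, hQQ, hPZ,
        hQZ, hQY, mul_assoc, zero_mul, mul_zero]
      abel
    rwa [e] at h
  refine ⟨⟨Q, hQM⟩, ⟨A + A - Q, sub_mem (add_mem hA hA) hQM⟩, Subtype.ext hQQ, Subtype.ext hPQ,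
    Subtype.ext hQP, ?_, ?_, Subtype.ext ?_⟩
  · show 0 ≤ A + A - Q
    have : A + A - Q = Y + (P - Q - Z) := by rw [hAA]; abel
    rw [this]; exact add_nonneg hY hlow
  · show A + A - Q ≤ P
    rw [← sub_nonneg]
    have : P - (A + A - Q) = (Q - Y) + Z := by rw [hAA]; abel
    rw [this]; exact add_nonneg hup hZ
  · show A + A = Q + (A + A - Q)
    abel

lemma psi_D_interval (hp : IsStarProjection (p : H →L[ℂ] H)) (hfin : t.τ p < ⊤) {D : M → M}
    (hD : IsDerivation M D) {a : M}
    (ha0 : 0 ≤ (a : H →L[ℂ] H)) (hap : (a : H →L[ℂ] H) ≤ p) : psi t p (D a) = 0 := by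
  obtain ⟨C, hC0, hC⟩ := hD.d_bounded
  have step : ∀ n : ℕ, ∃ r : M, 0 ≤ (r : H →L[ℂ] H) ∧ (r : H →L[ℂ] H) ≤ p ∧
      2 ^ n * psi t p (D a) = psi t p (D r) := by
    intro n
    induction n with
    | zero => exact ⟨a, ha0, hap, by simp⟩
    | succ n ih =>
      obtain ⟨r, hr0, hrp, hr⟩ := ih
      obtain ⟨q, r', hq, hpq, hqp, hr0', hrp', he⟩ := bisect hp hr0 hrp
      refine ⟨r', hr0', hrp', ?_⟩
      have h1 : psi t p (D (r + r)) = psi t p (D (q + r')) := by rw [he]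
      rw [hD.1, hD.1, psi_add hp hfin, psi_add hp hfin, psi_D_proj hp hfin hD hq hpq hqp] at h1
      rw [pow_succ]
      linarith
  have bd : ∀ n : ℕ, 2 ^ n * |psi t p (D a)| ≤ C * gF t p 1 := by
    intro n
    obtain ⟨r, hr0, hrp, hr⟩ := step n
    have h1 : 2 ^ n * |psi t p (D a)| = |psi t p (D r)| := by
      rw [← hr, abs_mul, abs_of_nonneg (by positivity : (0 : ℝ) ≤ 2 ^ n)]
    rw [h1]
    refine (psi_bound hp hfin _).trans ?_
    have h2 := hC r (IsSelfAdjoint.of_nonneg hr0)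
    have h3 : ‖(r : H →L[ℂ] H)‖ ≤ 1 :=
      (CStarAlgebra.norm_le_norm_of_nonneg_of_le hr0 hrp).trans hp.norm_le
    have h4 := gF_nonneg (t := t) (p := p) 1
    gcongr
    calc _ ≤ _ := h2
      _ ≤ C * 1 := by gcongr
      _ = C := mul_one C
  by_contra hne
  have hpos : 0 < |psi t p (D a)| := abs_pos.2 hne
  obtain ⟨n, hn⟩ := pow_unbounded_of_one_lt (C * gF t p 1 / |psi t p (D a)|) one_lt_two
  rw [div_lt_iff₀ hpos] at hn
  linarith [bd n]

lemma psi_D_sa (hp : IsStarProjection (p : H →L[ℂ] H)) (hfin : t.τ p < ⊤) {D : M → M}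
    (hD : IsDerivation M D) (u : M) (hu : IsSelfAdjoint (u : H →L[ℂ] H)) :
    psi t p (D (p * u * p)) = 0 := by
  set N : ℝ := ‖(u : H →L[ℂ] H)‖ with hN
  have hN0 : 0 ≤ N := norm_nonneg _
  have hc : 0 < 2 * N + 1 := by positivity
  set c : ℝ := (2 * N + 1)⁻¹ with hcdef
  have hc0 : 0 < c := inv_pos.2 hc
  have hpp := proj_mul hp
  set a : M := (c : ℂ) • (p * (u + (N : ℂ) • 1) * p) with ha
  have hB : ∀ r : ℝ, algebraMap ℝ (H →L[ℂ] H) r = (((r : ℂ) • (1 : M) : M) : H →L[ℂ] H) := by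
    intro r; ext v; simp [Algebra.algebraMap_eq_smul_one]
  have hlow : 0 ≤ ((u + (N : ℂ) • 1 : M) : H →L[ℂ] H) := by
    have h1 := hu.neg_algebraMap_norm_le_self
    rw [neg_le_iff_add_nonneg, hB] at h1
    exact h1
  have hpos1 : IsPos M (u + (N : ℂ) • 1) := isPos_iff.2 hlow
  have ha0 : 0 ≤ (a : H →L[ℂ] H) := isPos_iff.1 (isPos_smul (isPos_conj hp hpos1) hc0.le)
  have hupp : IsPos M ((N : ℂ) • 1 - u + ((1 : ℝ) : ℂ) • 1) := by
    have h1 := hu.le_algebraMap_norm_self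
    rw [← sub_nonneg, hB] at h1
    exact isPos_add (isPos_iff.2 h1) (isPos_smul isPos_one zero_le_one)
  have hap : (a : H →L[ℂ] H) ≤ p := by
    rw [← sub_nonneg]
    have h2 := isPos_iff.1 (isPos_smul (isPos_conj hp hupp) hc0.le)
    have e : p - a = (c : ℂ) • (p * ((N : ℂ) • 1 - u + ((1 : ℝ) : ℂ) • 1) * p) := by
      have e1 : p = (c : ℂ) • (p * (((2 * N + 1 : ℝ) : ℂ) • (1 : M)) * p) := by
        have : p * (((2 * N + 1 : ℝ) : ℂ) • (1 : M)) * p = ((2 * N + 1 : ℝ) : ℂ) • (p * p) := by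
          ext v; simp
        rw [this, hpp, smul_smul, ← Complex.ofReal_mul, hcdef, inv_mul_cancel₀ hc.ne',
          Complex.ofReal_one, one_smul]
      conv_lhs => rw [e1, ha]
      rw [← smul_sub, ← sub_mul, ← mul_sub]
      congr 3
      ext v; simp; module
    rw [← e] at h2
    exact h2
  have h1 := psi_D_interval hp hfin (hD.d_smul ((2 * N + 1 : ℝ) : ℂ)) ha0 hap
  have h2 := psi_D_proj hp hfin (hD.d_smul (N : ℂ)) hpp hpp hpp
  rw [← hD.2.1] at h1 h2
  have e : p * u * p = ((2 * N + 1 : ℝ) : ℂ) • a - (N : ℂ) • p := by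
    rw [ha, smul_smul, ← Complex.ofReal_mul, hcdef, mul_inv_cancel₀ hc.ne', Complex.ofReal_one,
      one_smul]
    have : p * (u + (N : ℂ) • 1) * p = p * u * p + (N : ℂ) • (p * p) := by
      rw [mul_add, add_mul]; congr 1; ext v; simp
    rw [this, hpp, add_sub_cancel_right]
  rw [e, hD.d_sub, psi_sub hp hfin, h1, h2, sub_zero]

lemma psi_D_compr (hp : IsStarProjection (p : H →L[ℂ] H)) (hfin : t.τ p < ⊤) {D : M → M}
    (hD : IsDerivation M D) (u : M) : psi t p (D (p * u * p)) = 0 := by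
  have h1 := psi_D_sa hp hfin (hD.d_smul (1 / 2 : ℂ)) (u + star u)
    (IsSelfAdjoint.add_star_self (u : H →L[ℂ] H))
  have hsa2 : IsSelfAdjoint ((Complex.I • (u - star u) : M) : H →L[ℂ] H) := by
    show star (Complex.I • ((u : H →L[ℂ] H) - star (u : H →L[ℂ] H)))
      = Complex.I • ((u : H →L[ℂ] H) - star (u : H →L[ℂ] H))
    rw [star_smul, star_sub, star_star]
    simp
    rw [← smul_neg, neg_sub]
  have h2 := psi_D_sa hp hfin (hD.d_smul (-Complex.I / 2 : ℂ)) (Complex.I • (u - star u)) hsa2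
  rw [← hD.2.1] at h1 h2
  have e : p * u * p = (1 / 2 : ℂ) • (p * (u + star u) * p)
      + (-Complex.I / 2) • (p * (Complex.I • (u - star u)) * p) := by
    have e0 : p * (Complex.I • (u - star u)) * p = Complex.I • (p * (u - star u) * p) := by
      ext v; simp
    have e1 : -Complex.I / 2 * Complex.I = 1 / 2 := by
      have := Complex.I_mul_I
      linear_combination (-1 / 2 : ℂ) * this
    rw [e0, smul_smul, e1]
    simp only [mul_add, mul_sub, add_mul, sub_mul]
    ext v; simp; module
  rw [e, hD.1, psi_add hp hfin, h1, h2, add_zero]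

/-- Integration by parts. -/
lemma psi_D_formula (hp : IsStarProjection (p : H →L[ℂ] H)) (hfin : t.τ p < ⊤) {D : M → M}
    (hD : IsDerivation M D) (u : M) :
    psi t p (D u) = - psi t p (D p * u) - psi t p (u * D p) := by
  have hpp := proj_mul hp
  have h := psi_D_compr hp hfin hD u
  rw [hD.2.2, hD.2.2, add_mul, psi_add hp hfin, psi_add hp hfin, psi_conj hp hfin] at h
  have e1 : psi t p (D p * u * p) = psi t p (D p * u) := by
    rw [← psi_conj hp hfin, ← psi_conj hp hfin (D p * u)]
    congr 1
    simp only [mul_assoc, hpp]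
  have e2 : psi t p (p * u * D p) = psi t p (u * D p) := by
    rw [← psi_conj hp hfin, ← psi_conj hp hfin (u * D p)]
    congr 1
    rw [← mul_assoc p, ← mul_assoc p p, hpp, mul_assoc p u]
  linarith

/-- Nonzero projections dominate nonzero projections of finite trace. -/
lemma exists_finite_proj (t : FNSTrace M) {q : M} (hq : IsStarProjection (q : H →L[ℂ] H))
    (hq0 : q ≠ 0) :
    ∃ p : M, IsStarProjection (p : H →L[ℂ] H) ∧ t.τ p < ⊤ ∧ p ≠ 0 ∧ q * p = p := by
  obtain ⟨y, hy, hy0, hyq, hyfin⟩ := t.semifinite q (isPos_iff.2 hq.nonneg) hq0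
  have hypos := isPos_iff.1 hy
  have hyle : (y : H →L[ℂ] H) ≤ q := hyq
  have hn : 0 < ‖(y : H →L[ℂ] H)‖ := norm_pos_iff.2 (fun h => hy0 (Subtype.ext h))
  set μ : ℝ := ‖(y : H →L[ℂ] H)‖ / 2 with hμ
  have hμ0 : 0 < μ := by positivity
  set A := (y : H →L[ℂ] H) with hA
  set Q := (q : H →L[ℂ] H) with hQ
  have hQQ : Q * Q = Q := hq.isIdempotentElem
  have hQsa : star Q = Q := hq.isSelfAdjoint.star_eq
  have hA1 : A * (1 - Q) = 0 := by
    have h1 : (1 - Q) * A * (1 - Q) ≤ (1 - Q) * Q * (1 - Q) :=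
      (hq.one_sub.isSelfAdjoint).conjugate_le_conjugate hyle
    have h2 : (1 - Q) * Q = 0 := by rw [sub_mul, one_mul, hQQ, sub_self]
    rw [h2, zero_mul] at h1
    have h3 : 0 ≤ (1 - Q) * A * (1 - Q) := hq.one_sub.isSelfAdjoint.conjugate_nonneg hypos
    have h4 := le_antisymm h1 h3
    set s := CFC.sqrt A with hs
    have hss : s * s = A := CFC.sqrt_mul_sqrt_self _ hypos
    have hssa : star s = s := (IsSelfAdjoint.of_nonneg (CFC.sqrt_nonneg A)).star_eq
    have h5 : star (s * (1 - Q)) * (s * (1 - Q)) = 0 := by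
      rw [star_mul, hssa, hq.one_sub.isSelfAdjoint.star_eq, ← h4, ← hss]
      simp only [mul_assoc]
    have h6 : s * (1 - Q) = 0 := (CStarRing.star_mul_self_eq_zero_iff _).1 h5
    rw [← hss, mul_assoc, h6, mul_zero]
  have hsm : (μ : ℂ) • Q = μ • Q := by ext v; simp
  have hXM : A - μ • Q ∈ M := by
    rw [← hsm]; exact sub_mem y.2 (SMulMemClass.smul_mem _ q.2)
  have hAsa : IsSelfAdjoint A := IsSelfAdjoint.of_nonneg hypos
  have hXsa : IsSelfAdjoint (A - μ • Q) :=
    hAsa.sub (IsSelfAdjoint.smul (by simp [IsSelfAdjoint]) hq.isSelfAdjoint)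
  obtain ⟨P, Y, Z, hPM, hP, hY, hZ, hXYZ, hYP, hZP, -, hPe⟩ := vn_spectral M hXM hXsa
  have hPP : P * P = P := hP.isIdempotentElem
  have hPsa : star P = P := hP.isSelfAdjoint.star_eq
  have hPQ : P * Q = P := by
    have : (A - μ • Q) * (1 - Q) = 0 := by
      rw [sub_mul, hA1, smul_mul_assoc, mul_sub, mul_one, hQQ, sub_self, smul_zero, sub_zero]
    have := hPe _ this
    rw [mul_sub, mul_one, sub_eq_zero] at this; exact this.symm
  have hQP : Q * P = P := by
    have := congr(star $hPQ); rwa [star_mul, hPsa, hQsa] at this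
  have hPY : P * Y = Y := by
    have := congr(star $hYP)
    rwa [star_mul, hPsa, (IsSelfAdjoint.of_nonneg hY).star_eq] at this
  have hPZ : P * Z = 0 := by
    have := congr(star $hZP)
    rwa [star_mul, hPsa, (IsSelfAdjoint.of_nonneg hZ).star_eq, star_zero] at this
  have hAe : A = Y - Z + μ • Q := by rw [← hXYZ]; abel
  have hAP : A * P = Y + μ • P := by
    rw [hAe, add_mul, sub_mul, hYP, hZP, smul_mul_assoc, hQP, sub_zero]
  have hPA : P * A = Y + μ • P := by
    rw [hAe, mul_add, mul_sub, hPY, hPZ, mul_smul_comm, hPQ, sub_zero]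
  have hle : μ • P ≤ A := by
    have h1 : 0 ≤ (1 - P) * A * (1 - P) := hP.one_sub.isSelfAdjoint.conjugate_nonneg hypos
    have e : (1 - P) * A * (1 - P) = A - (Y + μ • P) := by
      have e1 : P * A * P = A * P := by
        rw [mul_assoc, hAP, mul_add, hPY, mul_smul_comm, hPP]
      rw [sub_mul, one_mul, mul_sub, mul_one, sub_mul, hPA, hAP]
      rw [← hPA, e1, hAP, hPA]
      abel
    rw [e, sub_nonneg] at h1
    exact (le_add_of_nonneg_left hY).trans h1
  refine ⟨⟨P, hPM⟩, hP, ?_, ?_, Subtype.ext hQP⟩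
  · have hPpos : IsPos M ⟨P, hPM⟩ := isPos_iff.2 hP.nonneg
    obtain ⟨m, hm⟩ : ∃ m : ℝ≥0, (m : ℝ) = μ := ⟨⟨μ, hμ0.le⟩, rfl⟩
    have h1 := t.pos_smul m ⟨P, hPM⟩ hPpos
    rw [hm] at h1
    have h2 : t.τ ((μ : ℂ) • (⟨P, hPM⟩ : M)) ≤ t.τ y := by
      apply tau_mono t (isPos_smul hPpos hμ0.le)
      refine le_trans (le_of_eq ?_) hle
      ext v; simp
    have h3 : (m : ℝ≥0∞) * t.τ ⟨P, hPM⟩ < ⊤ := by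
      rw [← h1]; exact lt_of_le_of_lt h2 hyfin
    by_contra htop
    rw [not_lt, top_le_iff] at htop
    rw [htop, ENNReal.mul_top] at h3
    · exact lt_irrefl _ h3
    · intro h0
      rw [ENNReal.coe_eq_zero] at h0
      rw [h0] at hm
      exact hμ0.ne hm
  · intro h0
    have hP0 : P = 0 := congr(Subtype.val $h0)
    have hY0 : Y = 0 := by rw [← hYP, hP0, mul_zero]
    have h1 : A ≤ μ • Q := by
      rw [hAe, hY0, zero_sub]
      exact add_le_of_nonpos_left (neg_nonpos.2 hZ)
    have h2 := CStarAlgebra.norm_le_norm_of_nonneg_of_le hypos h1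
    rw [norm_smul, Real.norm_of_nonneg hμ0.le] at h2
    have h3 : ‖Q‖ ≤ 1 := hq.norm_le
    have h4 : μ * ‖Q‖ ≤ μ := mul_le_of_le_one_right hμ0.le h3
    linarith

/-- Self-adjoint elements are nonpositive if all their compressed traces are. -/
lemma nonpos_of_psi (t : FNSTrace M) (c : M) (hc : IsSelfAdjoint (c : H →L[ℂ] H))
    (h : ∀ p : M, IsStarProjection (p : H →L[ℂ] H) → t.τ p < ⊤ → psi t p c ≤ 0) :
    (c : H →L[ℂ] H) ≤ 0 := by
  obtain ⟨Q, Y, Z, hQM, hQ, hY, hZ, hXYZ, hYQ, hZQ, hQe, -⟩ := vn_spectral M c.2 hc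
  by_cases hQ0 : Q = 0
  · have hY0 : Y = 0 := by rw [← hYQ, hQ0, mul_zero]
    rw [hXYZ, hY0, zero_sub]
    exact neg_nonpos.2 hZ
  exfalso
  obtain ⟨p, hp, hfin, hp0, hqp⟩ := exists_finite_proj t (q := ⟨Q, hQM⟩) hQ
    (fun h => hQ0 congr(Subtype.val $h))
  have hQP : Q * (p : H →L[ℂ] H) = p := congr(Subtype.val $hqp)
  have hZP : Z * (p : H →L[ℂ] H) = 0 := by rw [← hQP, ← mul_assoc, hZQ, zero_mul]
  have hcp : ((p * c * p : M) : H →L[ℂ] H) = p * Y * p := by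
    show (p : H →L[ℂ] H) * c * p = p * Y * p
    rw [hXYZ, mul_sub, sub_mul, mul_assoc _ Z, hZP, mul_zero, sub_zero]
  have hpos : IsPos M (p * c * p) := by
    rw [isPos_iff, hcp]; exact hp.isSelfAdjoint.conjugate_nonneg hY
  have h1 := h p hp hfin
  rw [← psi_conj hp hfin, psi_pos hp hfin hpos] at h1
  have h2 : gF t p (p * c * p) = 0 := le_antisymm h1 (gF_nonneg _)
  have hpp := proj_mul hp
  have e1 : p * (p * c * p) * p = p * c * p := by
    rw [mul_assoc p c p, ← mul_assoc p p, hpp, mul_assoc, mul_assoc, hpp]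
  unfold gF at h2
  have h3 : t.τ (p * (p * c * p) * p) = 0 := by
    rcases (ENNReal.toReal_eq_zero_iff _).1 h2 with h | h
    · exact h
    · exact absurd h (tau_fin hp hfin hpos).ne
  rw [e1] at h3
  have h4 := t.faithful _ hpos h3
  have h5 : (p : H →L[ℂ] H) * Y * p = 0 := by rw [← hcp, h4]; rfl
  have h6 : Y * (p : H →L[ℂ] H) = 0 := by
    set s := CFC.sqrt Y with hs
    have hss : s * s = Y := CFC.sqrt_mul_sqrt_self _ hY
    have hssa : star s = s := (IsSelfAdjoint.of_nonneg (CFC.sqrt_nonneg Y)).star_eq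
    have h5 : star (s * (p : H →L[ℂ] H)) * (s * (p : H →L[ℂ] H)) = 0 := by
      rw [star_mul, hssa, hp.isSelfAdjoint.star_eq, ← h5, ← hss]
      simp only [mul_assoc]
    have h6 := (CStarRing.star_mul_self_eq_zero_iff _).1 h5
    rw [← hss, mul_assoc, h6, mul_zero]
  have h7 := hQe _ h6
  rw [hQP] at h7
  exact hp0 (Subtype.ext h7)

lemma re_zero_of_psi (t : FNSTrace M) (b : M)
    (h : ∀ p : M, IsStarProjection (p : H →L[ℂ] H) → t.τ p < ⊤ → psi t p b = 0) :
    (b : H →L[ℂ] H) + star (b : H →L[ℂ] H) = 0 := by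
  have hsa : IsSelfAdjoint ((b + star b : M) : H →L[ℂ] H) :=
    IsSelfAdjoint.add_star_self (b : H →L[ℂ] H)
  have h0 : ∀ p : M, IsStarProjection (p : H →L[ℂ] H) → t.τ p < ⊤ →
      psi t p (b + star b) = 0 := fun p hp hfin => by
    rw [psi_add hp hfin, psi_star, h p hp hfin, add_zero]
  have h1 := nonpos_of_psi t (b + star b) hsa (fun p hp hfin => (h0 p hp hfin).le)
  have h2 := nonpos_of_psi t (-(b + star b)) hsa.neg (fun p hp hfin => by
    rw [psi_neg hp hfin, h0 p hp hfin, neg_zero])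
  have h3 : -((b + star b : M) : H →L[ℂ] H) ≤ 0 := h2
  exact le_antisymm h1 (neg_nonpos.1 h3)

end FNSTrace

/-- Every 2-local derivation on a semi-finite von Neumann algebra (one admitting a faithful
normal semifinite trace) is additive. -/
theorem twoLocalDerivation_additive_of_semifinite
    (M : VonNeumannAlgebra H) (hM : Nonempty (FNSTrace M))
    (Δ : M → M) (hΔ : Is2LocalDerivation M Δ)
    (u v : M) : Δ (u + v) = Δ u + Δ v := by
  obtain ⟨t⟩ := hM
  have key : ∀ (c : ℂ) (p : M), IsStarProjection (p : H →L[ℂ] H) → t.τ p < ⊤ → ∀ w : M,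
      FNSTrace.psi t p (c • Δ w)
        = - FNSTrace.psi t p ((c • Δ p) * w) - FNSTrace.psi t p (w * (c • Δ p)) := by
    intro c p hp hfin w
    obtain ⟨D, hD, h1, h2⟩ := hΔ w p
    rw [h1, h2]
    exact FNSTrace.psi_D_formula hp hfin (hD.d_smul c) w
  have main : ∀ (c : ℂ) (p : M), IsStarProjection (p : H →L[ℂ] H) → t.τ p < ⊤ →
      FNSTrace.psi t p (c • Δ (u + v) - c • Δ u - c • Δ v) = 0 := by
    intro c p hp hfin
    rw [FNSTrace.psi_sub hp hfin, FNSTrace.psi_sub hp hfin, key c p hp hfin, key c p hp hfin u,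
      key c p hp hfin v, mul_add, add_mul, FNSTrace.psi_add hp hfin, FNSTrace.psi_add hp hfin]
    ring
  have h1 := FNSTrace.re_zero_of_psi t _ (main 1)
  have h2 := FNSTrace.re_zero_of_psi t _ (main Complex.I)
  set b : H →L[ℂ] H := (Δ (u + v) : H →L[ℂ] H) - Δ u - Δ v with hb
  have e1 : (((1 : ℂ) • Δ (u + v) - (1 : ℂ) • Δ u - (1 : ℂ) • Δ v : M) : H →L[ℂ] H) = b := by
    ext w; simp [hb]
  have e2 : ((Complex.I • Δ (u + v) - Complex.I • Δ u - Complex.I • Δ v : M) : H →L[ℂ] H)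
      = Complex.I • b := by
    ext w; simp [hb, smul_sub]
  rw [e1] at h1
  rw [e2, star_smul] at h2
  have h3 : Complex.I • (b - star b) = 0 := by
    rw [smul_sub]
    simpa [sub_eq_add_neg] using h2
  have h4 : b - star b = 0 := (smul_eq_zero.1 h3).resolve_left Complex.I_ne_zero
  have h5 : (2 : ℝ) • b = 0 := by
    rw [two_smul]
    have := congr($h1 + $h4)
    simpa using this
  have h6 : b = 0 := (smul_eq_zero.1 h5).resolve_left two_ne_zero
  ext1
  rw [hb, sub_sub, sub_eq_zero] at h6
  exact h6
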